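/- arXiv:2201.05181 — 2 statements merged into one kernel-verified Lean document; each statement's English description precedes it below -/
import Mathlib

section
/- For any integer $t \ge 3$ and any finite nonempty simple graph $G = G(V,E)$, there exists a vertex $v \in V$ such that $|T_v| \le \binom{\deg(v)+1}{t}$, where $T_v$ is the set of all $t$-cliques of $G$ intersecting the closed neighborhood of $v$. -/
/-!
Average over `v`, splitting `(deg v + 1).choose t` by Pascal's rule. The `t`-cliques through `v`
number at most `(deg v).choose (t - 1)`. A `t`-clique `K` that avoids `v` but meets its neighborhood
is recorded by the `(t + 1)`-set `S = K ∪ {v}` with the marked vertex `v`, and so is a `t`-subset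
`K` of the neighborhood of `v`, of which there are `(deg v).choose t`. It therefore suffices to
compare, for each fixed `S`, the vertices of `S` that can be marked in the first way with those
that can be marked in the second way. If `x` can be marked in the first way only and `y ∈ S` is not
adjacent to `x`, then no vertex outside `{x, y}` can be marked in the first way. If `x` alone can,
its neighbors in `S` can be marked in the second way; if both can, all of `S \ {x, y}` can, and
this has at least two elements because `4 ≤ t + 1`.
-/

section

open Finset

lemma sum_card_filter_powersetCard_erase {α : Type*} [DecidableEq α] (s : Finset α) (n : ℕ)
    (P : α → Finset α → Prop) [∀ a K, Decidable (P a K)] :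
    ∑ a ∈ s, #{K ∈ powersetCard n (s.erase a) | P a K} =
      ∑ S ∈ powersetCard (n + 1) s, #{a ∈ S | P a (S.erase a)} := by
  rw [← card_sigma, ← card_sigma]
  refine card_nbij' (fun p ↦ ⟨insert p.1 p.2, p.1⟩) (fun p ↦ ⟨p.2, p.1.erase p.2⟩) ?_ ?_ ?_ ?_
  · rintro ⟨a, K⟩ h
    simp only [coe_sigma, Set.mem_sigma_iff, mem_coe, mem_filter, mem_powersetCard,
      subset_erase] at h ⊢
    obtain ⟨ha, ⟨⟨hKs, haK⟩, hcard⟩, hP⟩ := h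
    exact ⟨⟨insert_subset ha hKs, by rw [card_insert_of_notMem haK, hcard]⟩,
      mem_insert_self a K, by rwa [erase_insert haK]⟩
  · rintro ⟨S, a⟩ h
    simp only [coe_sigma, Set.mem_sigma_iff, mem_coe, mem_filter, mem_powersetCard] at h ⊢
    obtain ⟨⟨hSs, hcard⟩, haS, hP⟩ := h
    exact ⟨hSs haS, ⟨erase_subset_erase a hSs, by rw [card_erase_of_mem haS, hcard]; rfl⟩, hP⟩
  · rintro ⟨a, K⟩ h
    simp only [coe_sigma, Set.mem_sigma_iff, mem_coe, mem_filter, mem_powersetCard,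
      subset_erase] at h
    simp [erase_insert h.2.1.1.2]
  · rintro ⟨S, a⟩ h
    simp only [coe_sigma, Set.mem_sigma_iff, mem_coe, mem_filter] at h
    simp [insert_erase h.2.1]

variable {V : Type*} [DecidableEq V] (G : SimpleGraph V) [DecidableRel G.Adj]

/-- The vertices of `S` adjacent to all other vertices of `S`. Each such `v` corresponds to the
subset `S \ {v}` of its neighborhood. -/
def dominatingVertices (S : Finset V) : Finset V :=
  {v ∈ S | ∀ u ∈ S.erase v, G.Adj v u}

/-- The vertices `v` of `S` for which `S \ {v}` is a clique containing a neighbor of `v`. Each such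
`v` corresponds to a clique that avoids `v` but meets its closed neighborhood. -/
def attachedVertices (S : Finset V) : Finset V :=
  {v ∈ S | G.IsClique (S.erase v : Set V) ∧ ∃ u ∈ S.erase v, G.Adj v u}

section LocalComparison

variable {G} {S : Finset V} {x y : V}

lemma attachedVertices_subset_pair (hx : x ∈ S) (hy : y ∈ S) (hne : x ≠ y)
    (hxy : ¬ G.Adj x y) : attachedVertices G S ⊆ {x, y} := by
  intro v hv
  have hclique : G.IsClique (S.erase v : Set V) := (mem_filter.1 hv).2.1
  by_contra! hvxy
  simp only [mem_insert, mem_singleton, not_or] at hvxy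
  exact hxy (hclique (mem_erase.2 ⟨Ne.symm hvxy.1, hx⟩) (mem_erase.2 ⟨Ne.symm hvxy.2, hy⟩) hne)

lemma mem_dominatingVertices_of_isClique_erase (hclique : G.IsClique (S.erase x : Set V))
    (hy : y ∈ S.erase x) (hyx : G.Adj y x) : y ∈ dominatingVertices G S := by
  refine mem_filter.2 ⟨mem_of_mem_erase hy, fun z hz ↦ ?_⟩
  obtain ⟨hzy, hzS⟩ := mem_erase.1 hz
  obtain rfl | hzx := eq_or_ne z x
  · exact hyx
  · exact hclique hy (mem_erase.2 ⟨hzx, hzS⟩) hzy.symm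

lemma sdiff_pair_subset_dominatingVertices (hx : x ∈ S) (hne : x ≠ y)
    (hcliquex : G.IsClique (S.erase x : Set V)) (hcliquey : G.IsClique (S.erase y : Set V)) :
    S \ {x, y} ⊆ dominatingVertices G S := by
  intro w hw
  simp only [mem_sdiff, mem_insert, mem_singleton, not_or] at hw
  obtain ⟨hwS, hwx, hwy⟩ := hw
  exact mem_dominatingVertices_of_isClique_erase hcliquex (mem_erase.2 ⟨hwx, hwS⟩)
    (hcliquey (mem_erase.2 ⟨hwy, hwS⟩) (mem_erase.2 ⟨hne, hx⟩) hwx)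

theorem card_attachedVertices_le_card_dominatingVertices (hS : 4 ≤ #S) :
    #(attachedVertices G S) ≤ #(dominatingVertices G S) := by
  by_cases hsub : attachedVertices G S ⊆ dominatingVertices G S
  · exact card_le_card hsub
  obtain ⟨x, hxA, hxD⟩ := not_subset.1 hsub
  obtain ⟨hxS, hcliquex, u, hu, hxu⟩ := mem_filter.1 hxA
  obtain ⟨y, hy, hxy⟩ : ∃ y ∈ S.erase x, ¬ G.Adj x y := by
    by_contra! hall
    exact hxD (mem_filter.2 ⟨hxS, hall⟩)
  obtain ⟨hyx, hyS⟩ := mem_erase.1 hy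
  have hpair : attachedVertices G S ⊆ {x, y} :=
    attachedVertices_subset_pair hxS hyS hyx.symm hxy
  by_cases hyA : y ∈ attachedVertices G S
  · have hcliquey : G.IsClique (S.erase y : Set V) := (mem_filter.1 hyA).2.1
    calc #(attachedVertices G S) ≤ #{x, y} := card_le_card hpair
      _ ≤ #S - #{x, y} := by have : #{x, y} ≤ 2 := card_le_two; lia
      _ ≤ #(S \ {x, y}) := le_card_sdiff _ _
      _ ≤ #(dominatingVertices G S) :=
        card_le_card (sdiff_pair_subset_dominatingVertices hxS hyx.symm hcliquex hcliquey)
  · have hsingle : attachedVertices G S ⊆ {x} := by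
      rw [pair_comm] at hpair
      exact (subset_insert_iff_of_notMem hyA).1 hpair
    have huD : u ∈ dominatingVertices G S :=
      mem_dominatingVertices_of_isClique_erase hcliquex hu hxu.symm
    calc #(attachedVertices G S) ≤ 1 := card_le_card hsingle
      _ ≤ #(dominatingVertices G S) := card_pos.2 ⟨u, huD⟩

end LocalComparison

variable [Fintype V]

/-- The set `T_v` of `t`-cliques meeting the closed neighborhood of `v`. -/
def touchingCliques (t : ℕ) (v : V) : Finset (Finset V) :=
  {s ∈ G.cliqueFinset t | (s ∩ insert v (G.neighborFinset v)).Nonempty}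

lemma card_filter_mem_cliqueFinset_le_choose_degree (k : ℕ) (v : V) :
    #{s ∈ G.cliqueFinset (k + 1) | v ∈ s} ≤ (G.degree v).choose k := by
  rw [← G.card_neighborFinset_eq_degree, ← card_powersetCard]
  refine card_le_card_of_injOn (fun s ↦ s.erase v) (fun s hs ↦ ?_)
    ((erase_injOn' v).mono fun s hs ↦ (mem_filter.1 hs).2)
  simp only [mem_coe, mem_filter, SimpleGraph.mem_cliqueFinset_iff,
    SimpleGraph.isNClique_iff] at hs
  obtain ⟨⟨hclique, hcard⟩, hvs⟩ := hs
  refine mem_powersetCard.2 ⟨fun u hu ↦ ?_, by rw [card_erase_of_mem hvs, hcard]; rfl⟩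
  obtain ⟨huv, hus⟩ := mem_erase.1 hu
  exact (G.mem_neighborFinset v u).2 (hclique hvs hus huv.symm)

lemma filter_notMem_touchingCliques (t : ℕ) (v : V) :
    {s ∈ touchingCliques G t v | v ∉ s} =
      (powersetCard t (univ.erase v)).filter fun K : Finset V ↦
        G.IsClique (K : Set V) ∧ ∃ u ∈ K, G.Adj v u := by
  ext K
  simp only [touchingCliques, Finset.Nonempty, mem_filter, mem_powersetCard, subset_erase,
    subset_univ, true_and, SimpleGraph.mem_cliqueFinset_iff, SimpleGraph.isNClique_iff, mem_inter,
    mem_insert, SimpleGraph.mem_neighborFinset]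
  grind

theorem sum_card_filter_notMem_touchingCliques (t : ℕ) :
    ∑ v, #{s ∈ touchingCliques G t v | v ∉ s} =
      ∑ S ∈ powersetCard (t + 1) univ, #(attachedVertices G S) := by
  simp only [filter_notMem_touchingCliques]
  exact sum_card_filter_powersetCard_erase univ t
    fun v K ↦ G.IsClique (K : Set V) ∧ ∃ u ∈ K, G.Adj v u

theorem sum_choose_degree (t : ℕ) :
    ∑ v, (G.degree v).choose t =
      ∑ S ∈ powersetCard (t + 1) univ, #(dominatingVertices G S) := by
  have hneighbors (v : V) : powersetCard t (G.neighborFinset v) =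
      {K ∈ powersetCard t (univ.erase v) | ∀ u ∈ K, G.Adj v u} := by
    ext K
    simp only [mem_filter, mem_powersetCard, subset_iff, mem_erase, mem_univ, and_true,
      SimpleGraph.mem_neighborFinset]
    grind [G.irrefl (v := v)]
  simp only [← G.card_neighborFinset_eq_degree, ← card_powersetCard, hneighbors,
    dominatingVertices]
  -- `convert` bridges two decidability instances for `∀ u ∈ K, G.Adj v u`.
  convert sum_card_filter_powersetCard_erase univ t fun v K ↦ ∀ u ∈ K, G.Adj v u

theorem sum_card_touchingCliques_le {t : ℕ} (ht : 3 ≤ t) :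
    ∑ v, #(touchingCliques G t v) ≤ ∑ v, (G.degree v + 1).choose t := by
  obtain ⟨k, rfl⟩ : ∃ k, t = k + 1 := ⟨t - 1, by lia⟩
  have hthrough (v : V) :
      #{s ∈ touchingCliques G (k + 1) v | v ∈ s} ≤ (G.degree v).choose k :=
    (card_le_card (filter_subset_filter _ (filter_subset _ _))).trans
      (card_filter_mem_cliqueFinset_le_choose_degree G k v)
  have havoiding : ∑ v, #{s ∈ touchingCliques G (k + 1) v | v ∉ s} ≤
      ∑ v, (G.degree v).choose (k + 1) := by
    rw [sum_card_filter_notMem_touchingCliques, sum_choose_degree]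
    refine sum_le_sum fun S hS ↦ card_attachedVertices_le_card_dominatingVertices ?_
    have := (mem_powersetCard.1 hS).2
    lia
  calc ∑ v, #(touchingCliques G (k + 1) v)
      = ∑ v, #{s ∈ touchingCliques G (k + 1) v | v ∈ s} +
          ∑ v, #{s ∈ touchingCliques G (k + 1) v | v ∉ s} := by
        simp only [← sum_add_distrib, card_filter_add_card_filter_not]
    _ ≤ ∑ v, (G.degree v).choose k + ∑ v, (G.degree v).choose (k + 1) :=
        add_le_add (sum_le_sum fun v _ ↦ hthrough v) havoiding
    _ = ∑ v, (G.degree v + 1).choose (k + 1) := by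
        simp only [Nat.choose_succ_succ', sum_add_distrib]

end

/-- For a finite nonempty simple graph `G` and `t ≥ 3`, there is a vertex `v` with
`|T_v| ≤ (deg v + 1).choose t`, where `T_v` is the set of `t`-cliques of `G` intersecting the
closed neighborhood of `v`. -/
theorem stmt_2 {V : Type*} [Fintype V] [DecidableEq V] [Nonempty V]
    (G : SimpleGraph V) [DecidableRel G.Adj] (t : ℕ) (ht : 3 ≤ t) :
    ∃ v : V, ((G.cliqueFinset t).filter
        (fun s => (s ∩ insert v (G.neighborFinset v)).Nonempty)).card
      ≤ (G.degree v + 1).choose t := by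
  obtain ⟨v, -, hv⟩ :=
    Finset.exists_le_of_sum_le Finset.univ_nonempty (sum_card_touchingCliques_le G ht)
  exact ⟨v, hv⟩
end

section
/- Let $G = G(V,E)$ be a finite simple graph and $t \ge 3$ an integer. Define $\Phi_{\mathrm{good}}$ to be the set of tuples $(u, x_1, \dotsc, x_t) \in V^{t+1}$ with $u, x_1, \dotsc, x_t$ pairwise distinct, such that $x_1, \dotsc, x_t$ form a $t$-clique in $G$ and $u \sim x_i$ for some $i \in [t]$. Define $\Omega_{\mathrm{good}}$ to be the set of tuples $(w, y_1, \dotsc, y_t) \in V^{t+1}$ with $w, y_1, \dotsc, y_t$ pairwise distinct, such that $w \sim y_i$ for all $i \in [t]$ and some $t-1$ of the vertices $y_1, \dotsc, y_t$ form a $(t-1)$-clique in $G$. Then $|\Phi_{\mathrm{good}}| \le |\Omega_{\mathrm{good}}|$. -/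
/-!
Sort the tuples of both kinds by their underlying set `S` of `t + 1` vertices: only the choice of
the first vertex matters, since the others can be ordered freely. So it suffices that, for each `S`,
at least as many vertices of `S` can play the role of `w` as can play the role of `u`. If `u` and
`v` are adjacent in `S` and `S \ {u}` is a clique, then `v` can play the role of `w`. Suppose some
possible `u` is not itself a possible `w`. Then `u` has no neighbour among the possible `u`s, so
there are at most two of these: two others `c` and `d` would give an edge `ud` of the clique
`S \ {c}`. If there are exactly two, then all of the `t - 1 ≥ 2` remaining vertices of `S` are
neighbours of `u` and hence possible `w`s.
-/

open Function

section PointedTuples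

variable {ι V : Type*} [Fintype ι] [DecidableEq V]

/-- The enumerations `f` without repetition, by the index type `ι`, of finite sets `S` for which
the entry at the marked index `i₀` lies in `A S`. -/
def pointedTuples (i₀ : ι) (A : Finset V → Finset V) : Set (ι → V) :=
  {f | Injective f ∧ f i₀ ∈ A (Finset.univ.image f)}

lemma image_swap_comp {f : ι → V} {a b : V} (ha : a ∈ Finset.univ.image f)
    (hb : b ∈ Finset.univ.image f) :
    Finset.univ.image (Equiv.swap a b ∘ f) = Finset.univ.image f := by
  rw [← Finset.image_image, ← Finset.coe_inj, Finset.coe_image]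
  refine Set.image_perm fun c hc => ?_
  rcases (Equiv.swap_apply_ne_self_iff.1 hc).2 with rfl | rfl <;> assumption

/-- The tuple `f` with `g S a` moved to the marked index `i₀`, where `S` is the set of entries of
`f` and `a = f i₀`. Exchanging `a` and `g S a` keeps the set of entries if `g S a ∈ S`, and then
makes the operation reversible if `g S` is injective. -/
def replaceMarked (g : Finset V → V → V) (i₀ : ι) (f : ι → V) : ι → V :=
  Equiv.swap (f i₀) (g (Finset.univ.image f) (f i₀)) ∘ f

lemma replaceMarked_apply_marked (g : Finset V → V → V) (i₀ : ι) (f : ι → V) :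
    replaceMarked g i₀ f i₀ = g (Finset.univ.image f) (f i₀) :=
  Equiv.swap_apply_left _ _

lemma image_replaceMarked {g : Finset V → V → V} {i₀ : ι} {f : ι → V}
    (h : g (Finset.univ.image f) (f i₀) ∈ Finset.univ.image f) :
    Finset.univ.image (replaceMarked g i₀ f) = Finset.univ.image f :=
  image_swap_comp (Finset.mem_image_of_mem f (Finset.mem_univ i₀)) h

lemma eq_of_replaceMarked_eq {g : Finset V → V → V} {i₀ : ι} {f f' : ι → V}
    (himage : Finset.univ.image f = Finset.univ.image f') (hmarked : f i₀ = f' i₀)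
    (h : replaceMarked g i₀ f = replaceMarked g i₀ f') : f = f' := by
  rw [replaceMarked, replaceMarked, himage, hmarked] at h
  exact (Equiv.injective _).comp_left h

lemma exists_mapsTo_injOn_of_card_le {α β : Type*} [Nonempty β] {A : Finset α} {B : Finset β}
    (h : A.card ≤ B.card) : ∃ g : α → β, Set.MapsTo g A B ∧ Set.InjOn g A :=
  A.finite_toSet.exists_injOn_of_encard_le (t := (B : Set β)) (by simpa using h)

theorem mk_pointedTuples_le (i₀ : ι) {A B : Finset V → Finset V} (hB : ∀ S, B S ⊆ S)
    (hAB : ∀ S, S.card = Fintype.card ι → (A S).card ≤ (B S).card) :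
    Cardinal.mk (pointedTuples i₀ A) ≤ Cardinal.mk (pointedTuples i₀ B) := by
  rcases isEmpty_or_nonempty V with hV | hV
  · have : IsEmpty (ι → V) := ⟨fun f => hV.elim (f i₀)⟩
    simp
  choose! g hg_maps hg_inj using fun S hS => exists_mapsTo_injOn_of_card_le (hAB S hS)
  have card_image {f : ι → V} (hf : f ∈ pointedTuples i₀ A) :
      (Finset.univ.image f).card = Fintype.card ι := Finset.card_image_of_injective _ hf.1
  have marked_mem {f : ι → V} (hf : f ∈ pointedTuples i₀ A) :
      g (Finset.univ.image f) (f i₀) ∈ B (Finset.univ.image f) := hg_maps _ (card_image hf) hf.2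
  have same_image {f : ι → V} (hf : f ∈ pointedTuples i₀ A) :
      Finset.univ.image (replaceMarked g i₀ f) = Finset.univ.image f :=
    image_replaceMarked (hB _ (marked_mem hf))
  have maps : Set.MapsTo (replaceMarked g i₀) (pointedTuples i₀ A) (pointedTuples i₀ B) := by
    refine fun f hf => ⟨(Equiv.injective _).comp hf.1, ?_⟩
    rw [same_image hf, replaceMarked_apply_marked]
    exact marked_mem hf
  have inj : Set.InjOn (replaceMarked g i₀) (pointedTuples i₀ A) := by
    intro f hf f' hf' h
    have himage : Finset.univ.image f = Finset.univ.image f' := by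
      rw [← same_image hf, h, same_image hf']
    have hmarked : g (Finset.univ.image f) (f i₀) = g (Finset.univ.image f) (f' i₀) := by
      rw [← replaceMarked_apply_marked g, h, replaceMarked_apply_marked, himage]
    exact eq_of_replaceMarked_eq himage
      (hg_inj _ (card_image hf) hf.2 (himage ▸ hf'.2) hmarked) h
  exact Cardinal.mk_le_of_injective (maps.restrict_inj.2 inj)

lemma cons_mem_pointedTuples {n : ℕ} {A : Finset V → Finset V} {u : V} {x : Fin n → V} :
    Fin.cons u x ∈ pointedTuples (0 : Fin (n + 1)) A ↔
      Injective (Fin.cons u x : Fin (n + 1) → V) ∧ u ∈ A (insert u (Finset.univ.image x)) := by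
  have image_cons : Finset.univ.image (Fin.cons u x : Fin (n + 1) → V) =
      insert u (Finset.univ.image x) := by
    simp [← Finset.coe_inj, Fin.range_cons]
  rw [pointedTuples, Set.mem_ofPred_eq, image_cons, Fin.cons_zero]

end PointedTuples

section Cliques

variable {V : Type*} [DecidableEq V] {G : SimpleGraph V} {S T : Finset V} {u v w : V}

open Classical in
/-- The vertices of `S` that can be the vertex `u` of a tuple of `Φ_good` with vertex set `S`: they
are attached by at least one edge to the rest of `S`, which is a clique. -/
noncomputable def cliqueAttachments (G : SimpleGraph V) (S : Finset V) : Finset V :=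
  {u ∈ S | G.IsClique (S.erase u) ∧ ∃ v ∈ S, G.Adj u v}

open Classical in
/-- The vertices of `S` that can be the vertex `w` of a tuple of `Ω_good` with vertex set `S`: they
are adjacent to the rest of `S`, which is a clique up to one vertex. As `S` has `t + 1` elements in
the application, the `(t - 1)`-clique is encoded as one of size `S.card - 2`. -/
noncomputable def cliqueApices (G : SimpleGraph V) (S : Finset V) : Finset V :=
  {w ∈ S | (∀ v ∈ S.erase w, G.Adj w v) ∧ ∃ s ⊆ S.erase w, G.IsNClique (S.card - 2) s}

lemma mem_cliqueAttachments :
    u ∈ cliqueAttachments G S ↔ u ∈ S ∧ G.IsClique (S.erase u) ∧ ∃ v ∈ S, G.Adj u v := by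
  simp only [cliqueAttachments, Finset.mem_filter]

lemma mem_cliqueApices :
    w ∈ cliqueApices G S ↔ w ∈ S ∧ (∀ v ∈ S.erase w, G.Adj w v) ∧
      ∃ s ⊆ S.erase w, G.IsNClique (S.card - 2) s := by
  simp only [cliqueApices, Finset.mem_filter]

lemma cliqueApices_subset : cliqueApices G S ⊆ S := fun _ hw => (mem_cliqueApices.1 hw).1

lemma mem_cliqueAttachments_insert (hu : u ∉ T) :
    u ∈ cliqueAttachments G (insert u T) ↔ G.IsClique T ∧ ∃ v ∈ T, G.Adj u v := by
  simp [mem_cliqueAttachments, Finset.erase_insert hu]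

lemma mem_cliqueApices_insert (hw : w ∉ T) :
    w ∈ cliqueApices G (insert w T) ↔
      (∀ v ∈ T, G.Adj w v) ∧ ∃ s ⊆ T, G.IsNClique (T.card - 1) s := by
  simp [mem_cliqueApices, Finset.erase_insert hw, Finset.card_insert_of_notMem hw]

lemma mem_cliqueApices_of_adj (hu : u ∈ cliqueAttachments G S) (hv : v ∈ S) (huv : G.Adj u v) :
    v ∈ cliqueApices G S := by
  obtain ⟨huS, hclique, -⟩ := mem_cliqueAttachments.1 hu
  have hv' : v ∈ S.erase u := Finset.mem_erase.2 ⟨huv.ne', hv⟩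
  refine mem_cliqueApices.2 ⟨hv, fun x hx => ?_, (S.erase u).erase v,
    Finset.erase_subset_erase _ (Finset.erase_subset _ _), ?_, ?_⟩
  · obtain ⟨hxv, hxS⟩ := Finset.mem_erase.1 hx
    rcases eq_or_ne x u with rfl | hxu
    · exact huv.symm
    · exact hclique hv' (Finset.mem_erase.2 ⟨hxu, hxS⟩) hxv.symm
  · exact hclique.subset (Finset.coe_subset.2 (Finset.erase_subset _ _))
  · rw [Finset.card_erase_of_mem hv', Finset.card_erase_of_mem huS, Nat.sub_sub]

lemma adj_of_mem_cliqueAttachments (hw : w ∈ cliqueAttachments G S) (hu : u ∈ S) (hv : v ∈ S)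
    (huw : u ≠ w) (hvw : v ≠ w) (huv : u ≠ v) : G.Adj u v :=
  (mem_cliqueAttachments.1 hw).2.1 (Finset.mem_erase.2 ⟨huw, hu⟩) (Finset.mem_erase.2 ⟨hvw, hv⟩) huv

lemma card_erase_cliqueAttachments_le_one (hu : u ∈ cliqueAttachments G S)
    (hu' : u ∉ cliqueApices G S) : ((cliqueAttachments G S).erase u).card ≤ 1 := by
  have huS := (mem_cliqueAttachments.1 hu).1
  refine Finset.card_le_one.2 fun c hc d hd => ?_
  obtain ⟨hcu, hcA⟩ := Finset.mem_erase.1 hc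
  obtain ⟨hdu, hdA⟩ := Finset.mem_erase.1 hd
  by_contra hcd
  have hdu_adj : G.Adj d u := adj_of_mem_cliqueAttachments hcA (mem_cliqueAttachments.1 hdA).1 huS
    (Ne.symm hcd) hcu.symm hdu
  exact hu' (mem_cliqueApices_of_adj hdA huS hdu_adj)

lemma erase_erase_subset_cliqueApices (hu : u ∈ cliqueAttachments G S)
    (hv : v ∈ cliqueAttachments G S) (huv : u ≠ v) :
    (S.erase u).erase v ⊆ cliqueApices G S := by
  intro w hw
  obtain ⟨hwv, hwu, hwS⟩ : w ≠ v ∧ w ≠ u ∧ w ∈ S := by simpa only [Finset.mem_erase] using hw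
  exact mem_cliqueApices_of_adj hu hwS
    (adj_of_mem_cliqueAttachments hv (mem_cliqueAttachments.1 hu).1 hwS huv hwv hwu.symm)

theorem card_cliqueAttachments_le_card_cliqueApices (hS : 4 ≤ S.card) :
    (cliqueAttachments G S).card ≤ (cliqueApices G S).card := by
  by_cases hsub : cliqueAttachments G S ⊆ cliqueApices G S
  · exact Finset.card_le_card hsub
  obtain ⟨u, hu, hu'⟩ := Finset.not_subset.1 hsub
  obtain ⟨huS, -, v, hv, huv⟩ := mem_cliqueAttachments.1 hu
  rw [← Finset.card_erase_add_one hu]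
  rcases ((cliqueAttachments G S).erase u).eq_empty_or_nonempty with hempty | ⟨b, hb⟩
  · rw [hempty, Finset.card_empty]
    exact Finset.card_pos.2 ⟨v, mem_cliqueApices_of_adj hu hv huv⟩
  · obtain ⟨hbu, hbA⟩ := Finset.mem_erase.1 hb
    have hbS : b ∈ S.erase u := Finset.mem_erase.2 ⟨hbu, (mem_cliqueAttachments.1 hbA).1⟩
    calc ((cliqueAttachments G S).erase u).card + 1
        ≤ 2 := Nat.succ_le_succ (card_erase_cliqueAttachments_le_one hu hu')
      _ ≤ ((S.erase u).erase b).card := by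
        rw [Finset.card_erase_of_mem hbS, Finset.card_erase_of_mem huS]
        omega
      _ ≤ (cliqueApices G S).card :=
        Finset.card_le_card (erase_erase_subset_cliqueApices hu hbA hbu.symm)

end Cliques

section Tuples

variable {V : Type*} [DecidableEq V] {G : SimpleGraph V} {t : ℕ} {u : V} {x : Fin t → V}

lemma notMem_image_and_card_image_of_injective_cons
    (h : Injective (Fin.cons u x : Fin (t + 1) → V)) :
    u ∉ Finset.univ.image x ∧ (Finset.univ.image x).card = t := by
  obtain ⟨hu, hx⟩ := Fin.cons_injective_iff.1 h
  exact ⟨by simpa using hu, by simp [Finset.card_image_of_injective _ hx]⟩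

lemma cons_mem_pointedTuples_cliqueAttachments :
    Fin.cons u x ∈ pointedTuples (0 : Fin (t + 1)) (cliqueAttachments G) ↔
      Injective (Fin.cons u x : Fin (t + 1) → V) ∧
        G.IsNClique t (Finset.univ.image x) ∧ ∃ i : Fin t, G.Adj u (x i) := by
  refine cons_mem_pointedTuples.trans (and_congr_right fun h => ?_)
  obtain ⟨hu, hcard⟩ := notMem_image_and_card_image_of_injective_cons h
  rw [mem_cliqueAttachments_insert hu, SimpleGraph.isNClique_iff, and_iff_left hcard]
  simp only [Finset.mem_image, Finset.mem_univ, true_and, exists_exists_eq_and]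

lemma cons_mem_pointedTuples_cliqueApices :
    Fin.cons u x ∈ pointedTuples (0 : Fin (t + 1)) (cliqueApices G) ↔
      Injective (Fin.cons u x : Fin (t + 1) → V) ∧
        (∀ i : Fin t, G.Adj u (x i)) ∧ ∃ s ⊆ Finset.univ.image x, G.IsNClique (t - 1) s := by
  refine cons_mem_pointedTuples.trans (and_congr_right fun h => ?_)
  obtain ⟨hu, hcard⟩ := notMem_image_and_card_image_of_injective_cons h
  rw [mem_cliqueApices_insert hu, hcard]
  simp only [Finset.mem_image, Finset.mem_univ, true_and, forall_exists_index,
    forall_apply_eq_imp_iff]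

end Tuples

theorem stmt_7_general {V : Type*} [DecidableEq V] (G : SimpleGraph V) (t : ℕ) (ht : 3 ≤ t) :
    Cardinal.mk {p : V × (Fin t → V) |
        Injective (Fin.cons p.1 p.2 : Fin (t + 1) → V) ∧
        G.IsNClique t (Finset.univ.image p.2) ∧ ∃ i : Fin t, G.Adj p.1 (p.2 i)}
      ≤ Cardinal.mk {p : V × (Fin t → V) |
        Injective (Fin.cons p.1 p.2 : Fin (t + 1) → V) ∧
        (∀ i : Fin t, G.Adj p.1 (p.2 i)) ∧
        ∃ s ⊆ Finset.univ.image p.2, G.IsNClique (t - 1) s} := by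
  have hcard (S : Finset V) (hS : S.card = Fintype.card (Fin (t + 1))) :
      (cliqueAttachments G S).card ≤ (cliqueApices G S).card := by
    rw [Fintype.card_fin] at hS
    exact card_cliqueAttachments_le_card_cliqueApices (by omega)
  simp only [← cons_mem_pointedTuples_cliqueAttachments, ← cons_mem_pointedTuples_cliqueApices]
  let e : V × (Fin t → V) ≃ (Fin (t + 1) → V) := Fin.consEquiv fun _ => V
  calc Cardinal.mk {p // e p ∈ pointedTuples 0 (cliqueAttachments G)}
      = Cardinal.mk (pointedTuples 0 (cliqueAttachments G)) := Cardinal.mk_subtype_of_equiv _ e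
    _ ≤ Cardinal.mk (pointedTuples 0 (cliqueApices G)) :=
      mk_pointedTuples_le 0 (fun _ => cliqueApices_subset) hcard
    _ = Cardinal.mk {p // e p ∈ pointedTuples 0 (cliqueApices G)} :=
      (Cardinal.mk_subtype_of_equiv _ e).symm

/-- `|Φ_good| ≤ |Ω_good|`: the number of tuples `(u, x_1, …, x_t)` of pairwise distinct
vertices such that `x_1, …, x_t` form a `t`-clique and `u` is adjacent to some `x_i` is at
most the number of tuples `(w, y_1, …, y_t)` of pairwise distinct vertices such that `w` is
adjacent to every `y_i` and some `t-1` of the `y_i` form a `(t-1)`-clique. -/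
theorem stmt_7 {V : Type*} [Fintype V] [DecidableEq V] (G : SimpleGraph V) [DecidableRel G.Adj]
    (t : ℕ) (ht : 3 ≤ t) :
    (Finset.univ.filter (fun p : V × (Fin t → V) =>
        Function.Injective (Fin.cons p.1 p.2 : Fin (t + 1) → V) ∧
        G.IsNClique t (Finset.univ.image p.2) ∧ ∃ i : Fin t, G.Adj p.1 (p.2 i))).card
      ≤ (Finset.univ.filter (fun p : V × (Fin t → V) =>
        Function.Injective (Fin.cons p.1 p.2 : Fin (t + 1) → V) ∧
        (∀ i : Fin t, G.Adj p.1 (p.2 i)) ∧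
        ∃ s ⊆ Finset.univ.image p.2, G.IsNClique (t - 1) s)).card := by
  simpa [Fintype.card_subtype] using stmt_7_general G t ht
end
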